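/- Let p be an odd prime, let G be a finite group, and let S be a Sylow p-subgroup of G that is split metacyclic, with E = Ω1(S) not contained in Z(S). Then for every subgroup Q of E of order p with Q not contained in Z(S), one has N_G(Q) = C_G(Q). -/

import Mathlib

/-!
Let `E = Ω₁(S)` and `Z = E ∩ C_G(S)`, which has order `p`. Since `p` is odd, commutation with an
element `e` of `E` is a power map on `S`: there is an `m` with `⁅x, e⁆ = x ^ m` for all `x ∈ S`.
Power maps commute with conjugation, so `N_G(S)` acts trivially on `E / Z`, and a Frattini argument
extends this to `N_G(E) ∩ N_G(Z)`. Moreover `N_G(E) ≤ N_G(Z)`: otherwise the transvections of `E`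
induced by `S` and by a conjugate of `S` with a different centre generate a Weyl element whose
square inverts `E`, which for odd `p` is not trivial on `E / Z`. Hence `N_G(E)` acts trivially on
`E / Z`.

As `E` is weakly closed in `S` and centralizes `Q`, another Frattini argument gives
`N_G(Q) ≤ C_G(Q) N_G(E)`. An element of `N_G(Q) ∩ N_G(E)` commutes with each `q ∈ Q` up to an
element of `Q ∩ Z = 1`.
-/

open Subgroup

/-- A `p`-group is split metacyclic if it is the internal semidirect product of a
cyclic normal subgroup by a cyclic subgroup. -/
def IsSplitMetacyclic (H : Type*) [Group H] : Prop :=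
  ∃ C K : Subgroup H, ∃ _ : C.Normal,
    IsCyclic C ∧ IsCyclic K ∧ C ⊓ K = ⊥ ∧ C ⊔ K = ⊤

/-- `Ω₁(S)`: the subgroup generated by the elements of `S` of order dividing `p`. -/
def omega1 {G : Type*} [Group G] (p : ℕ) (S : Subgroup G) : Subgroup G :=
  Subgroup.closure {g : G | g ∈ S ∧ g ^ p = 1}

open scoped commutatorElement

section OmegaOne

variable {G : Type*} [Group G] {p : ℕ} {S : Subgroup G}

theorem mem_omega1_of_pow_eq_one {x : G} (hx : x ∈ S) (hxp : x ^ p = 1) : x ∈ omega1 p S :=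
  subset_closure ⟨hx, hxp⟩

theorem omega1_le : omega1 p S ≤ S :=
  (closure_le S).mpr fun _ hx => hx.1

theorem pow_eq_one_of_mem_omega1_of_commute
    (hcomm : ∀ a ∈ S, ∀ b ∈ S, a ^ p = 1 → b ^ p = 1 → Commute a b) {x : G}
    (hx : x ∈ omega1 p S) : x ^ p = 1 := by
  suffices x ∈ S ∧ x ^ p = 1 from this.2
  induction hx using closure_induction with
  | mem _ hx => exact hx
  | one => exact ⟨one_mem _, one_pow p⟩
  | mul a b _ _ ha hb =>
    refine ⟨mul_mem ha.1 hb.1, ?_⟩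
    rw [(hcomm a ha.1 b hb.1 ha.2 hb.2).mul_pow, ha.2, hb.2, one_mul]
  | inv a _ ha => exact ⟨inv_mem ha.1, by rw [inv_pow, ha.2, inv_one]⟩

theorem card_eq_prime_of_forall_pow_eq_one [hp : Fact p.Prime] [IsCyclic G] [Nontrivial G]
    (h : ∀ x : G, x ^ p = 1) : Nat.card G = p := by
  have hdvd : Nat.card G ∣ p := by
    rw [← IsCyclic.exponent_eq_card]
    exact Monoid.exponent_dvd_of_forall_pow_eq_one h
  have : Finite G := Nat.finite_of_card_ne_zero (ne_zero_of_dvd_ne_zero hp.out.ne_zero hdvd)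
  exact ((Nat.dvd_prime hp.out).mp hdvd).resolve_left Finite.one_lt_card.ne'

theorem mem_zpowers_of_pow_prime_eq_one [hp : Fact p.Prime] [IsCyclic S] {a b : G} (ha : a ∈ S)
    (hb : b ∈ S) (hap : orderOf a = p) (hbp : b ^ p = 1) : b ∈ zpowers a := by
  have haΩ : a ∈ omega1 p S := mem_omega1_of_pow_eq_one ha (hap ▸ pow_orderOf_eq_one a)
  have hΩ : ∀ x : omega1 p S, x ^ p = 1 := fun x =>
    Subtype.ext <|
      pow_eq_one_of_mem_omega1_of_commute (fun _ hx _ hy _ _ => setLike_mul_comm hx hy) x.2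
  have : IsCyclic (omega1 p S) := isCyclic_of_le omega1_le
  have : Nontrivial (omega1 p S) := by
    refine (nontrivial_iff_exists_ne_one _).mpr ⟨a, haΩ, ?_⟩
    rintro rfl
    exact hp.out.ne_one (hap ▸ orderOf_one)
  have hcard : Nat.card (omega1 p S) = p := card_eq_prime_of_forall_pow_eq_one hΩ
  have : Finite (omega1 p S) := Nat.finite_of_card_ne_zero (by rw [hcard]; exact hp.out.ne_zero)
  have hgen : zpowers a = omega1 p S :=
    eq_of_le_of_card_ge (zpowers_le.mpr haΩ) (by rw [hcard, Nat.card_zpowers, hap])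
  exact hgen ▸ mem_omega1_of_pow_eq_one hb hbp

end OmegaOne

theorem geom_sum_range_mul {R : Type*} [CommSemiring R] (x : R) (m n : ℕ) :
    ∑ t ∈ Finset.range (m * n), x ^ t =
      (∑ t ∈ Finset.range m, x ^ t) * ∑ t ∈ Finset.range n, (x ^ m) ^ t := by
  induction n with
  | zero => simp
  | succ n ih =>
    rw [Nat.mul_succ, Finset.sum_range_add, ih, Finset.sum_range_succ, mul_add,
      Finset.sum_mul _ _ ((x ^ m) ^ n)]
    simp only [pow_add, pow_mul, mul_comm]

theorem sq_dvd_geom_sum_sub {p : ℕ} (hodd : Odd p) {R : ℤ} (hR : (p : ℤ) ∣ R - 1) :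
    (p : ℤ) ^ 2 ∣ ∑ t ∈ Finset.range p, R ^ t - p := by
  obtain ⟨b, hb⟩ := hR
  obtain rfl : R = 1 + p * b := by linarith
  simpa using odd_sq_dvd_geom_sum₂_sub (R := ℤ) (a := 1) (b := b) hodd

theorem pow_succ_dvd_geom_sum_sub {p : ℕ} (hodd : Odd p) {R : ℤ} (hR : (p : ℤ) ∣ R - 1) (n : ℕ) :
    (p : ℤ) ^ (n + 1) ∣ ∑ t ∈ Finset.range (p ^ n), R ^ t - p ^ n := by
  induction n with
  | zero => simp
  | succ n ih =>
    have hRn : (p : ℤ) ∣ R ^ p ^ n - 1 :=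
      hR.trans (by simpa using sub_dvd_pow_sub_pow R 1 (p ^ n))
    obtain ⟨a, ha⟩ := ih
    obtain ⟨b, hb⟩ := sq_dvd_geom_sum_sub hodd hRn
    rw [pow_succ p n, geom_sum_range_mul, eq_add_of_sub_eq ha, eq_add_of_sub_eq hb]
    exact ⟨a + b + p * a * b, by ring⟩

section CyclicNormal

variable {H : Type*} [Group H] {c y : H} {R : ℤ}

theorem pow_conj_eq_zpow_pow (hy : y * c * y⁻¹ = c ^ R) (j : ℕ) :
    y ^ j * c * (y ^ j)⁻¹ = c ^ R ^ j := by
  induction j with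
  | zero => simp
  | succ j ih =>
    calc y ^ (j + 1) * c * (y ^ (j + 1))⁻¹ = y * (y ^ j * c * (y ^ j)⁻¹) * y⁻¹ := by
          rw [pow_succ']; group
      _ = c ^ R ^ (j + 1) := by rw [ih, ← conj_zpow, hy, ← zpow_mul, pow_succ']

theorem zpow_mul_pow_eq (hy : y * c * y⁻¹ = c ^ R) (i : ℤ) (q : ℕ) :
    (c ^ i * y) ^ q = c ^ (i * ∑ t ∈ Finset.range q, R ^ t) * y ^ q := by
  have hyc (a : ℤ) : y * c ^ a = c ^ (R * a) * y := by
    rw [zpow_mul, ← hy, conj_zpow, inv_mul_cancel_right]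
  induction q with
  | zero => simp
  | succ q ih =>
    calc (c ^ i * y) ^ (q + 1)
        = c ^ i * (y * c ^ (i * ∑ t ∈ Finset.range q, R ^ t)) * y ^ q := by
          rw [pow_succ', ih]; group
      _ = c ^ (i + R * (i * ∑ t ∈ Finset.range q, R ^ t)) * y ^ (q + 1) := by
          rw [hyc, zpow_add, pow_succ']; group
      _ = c ^ (i * ∑ t ∈ Finset.range (q + 1), R ^ t) * y ^ (q + 1) := by
          rw [geom_sum_succ]; ring_nf

variable {p : ℕ} [Fact p.Prime] [(zpowers c).Normal]

theorem exists_conj_eq_zpow (hH : IsPGroup p H) (hc : p ∣ orderOf c) (y : H) :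
    ∃ R : ℤ, (p : ℤ) ∣ R - 1 ∧ y * c * y⁻¹ = c ^ R := by
  obtain ⟨R, hR : c ^ R = y * c * y⁻¹⟩ :=
    Normal.conj_mem inferInstance c (mem_zpowers c) y
  obtain ⟨t, ht⟩ := hH y
  have hone : c ^ (R ^ p ^ t - 1) = 1 := by
    rw [zpow_sub, ← pow_conj_eq_zpow_pow hR.symm, ht]
    group
  have hdvd : (p : ℤ) ∣ R ^ p ^ t - 1 :=
    (Int.natCast_dvd_natCast.mpr hc).trans (orderOf_dvd_iff_zpow_eq_one.mpr hone)
  refine ⟨R, ?_, hR.symm⟩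
  rw [← ZMod.intCast_zmod_eq_zero_iff_dvd] at hdvd ⊢
  push_cast at hdvd ⊢
  rwa [ZMod.pow_card_pow] at hdvd

variable {n : ℕ}

theorem commute_pow_prime_pow (hH : IsPGroup p H) (hc : orderOf c = p ^ (n + 1)) (y : H) :
    Commute y (c ^ p ^ n) := by
  obtain ⟨R, ⟨d, hd⟩, hy⟩ := exists_conj_eq_zpow hH (hc ▸ dvd_pow_self p n.succ_ne_zero) y
  have hfix : y * c ^ p ^ n * y⁻¹ = c ^ p ^ n := by
    rw [← conj_pow, hy, ← zpow_natCast, ← zpow_mul, ← zpow_natCast,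
      ← orderOf_dvd_sub_iff_zpow_eq_zpow, hc]
    exact ⟨d, by push_cast; linear_combination (p : ℤ) ^ n * hd⟩
  exact mul_inv_eq_iff_eq_mul.mp hfix

variable {K : Subgroup H}

theorem exists_zpow_mul_eq_of_isCompl (hK : IsCompl (zpowers c) K) (x : H) :
    ∃ i : ℤ, ∃ y ∈ K, c ^ i * y = x := by
  obtain ⟨_, ⟨i, rfl⟩, y, hy, rfl⟩ :=
    mem_sup_of_normal_left.mp (hK.sup_eq_top ▸ mem_top x : x ∈ zpowers c ⊔ K)
  exact ⟨i, y, hy, rfl⟩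

theorem pow_dvd_of_zpow_mul_pow_eq_one (hodd : Odd p) (hH : IsPGroup p H)
    (hc : orderOf c = p ^ (n + 1)) (hK : Disjoint (zpowers c) K) {i : ℤ} (hy : y ∈ K)
    (h : (c ^ i * y) ^ p = 1) : y ^ p = 1 ∧ (p : ℤ) ^ n ∣ i := by
  obtain ⟨R, hR, hyR⟩ := exists_conj_eq_zpow hH (hc ▸ dvd_pow_self p n.succ_ne_zero) y
  rw [zpow_mul_pow_eq hyR] at h
  obtain ⟨hcp, hyp⟩ := disjoint_iff_mul_eq_one.mp hK (zpow_mem_zpowers c _) (pow_mem hy p) h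
  refine ⟨hyp, ?_⟩
  obtain ⟨d, hd⟩ := sq_dvd_geom_sum_sub hodd hR
  have hdvd : (p : ℤ) ^ n * p ∣ i * (1 + p * d) * p := by
    rw [← orderOf_dvd_iff_zpow_eq_one, hc, eq_add_of_sub_eq hd] at hcp
    convert hcp using 1 <;> push_cast <;> ring
  have hp0 : (p : ℤ) ≠ 0 := mod_cast (Fact.out : p.Prime).ne_zero
  exact (IsCoprime.pow_left ⟨-d, 1, by ring⟩).dvd_of_dvd_mul_right
    ((mul_dvd_mul_iff_right hp0).mp hdvd)

theorem exists_zpow_mul_eq_of_pow_eq_one (hodd : Odd p) (hH : IsPGroup p H)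
    (hc : orderOf c = p ^ (n + 1)) (hK : IsCompl (zpowers c) K) {e : H} (he : e ^ p = 1) :
    ∃ a : ℤ, ∃ y ∈ K, y ^ p = 1 ∧ (c ^ p ^ n) ^ a * y = e := by
  obtain ⟨i, y, hy, rfl⟩ := exists_zpow_mul_eq_of_isCompl hK e
  obtain ⟨hyp, a, rfl⟩ := pow_dvd_of_zpow_mul_pow_eq_one hodd hH hc hK.disjoint hy he
  refine ⟨a, y, hy, hyp, ?_⟩
  rw [zpow_mul]
  norm_cast

theorem commute_of_pow_eq_one_of_isCompl [IsMulCommutative K] (hodd : Odd p) (hH : IsPGroup p H)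
    (hc : orderOf c = p ^ (n + 1)) (hK : IsCompl (zpowers c) K) {a b : H} (ha : a ^ p = 1)
    (hb : b ^ p = 1) : Commute a b := by
  obtain ⟨i, x, hx, -, rfl⟩ := exists_zpow_mul_eq_of_pow_eq_one hodd hH hc hK ha
  obtain ⟨j, y, hy, -, rfl⟩ := exists_zpow_mul_eq_of_pow_eq_one hodd hH hc hK hb
  have hcent (i : ℤ) (x : H) : Commute x ((c ^ p ^ n) ^ i) :=
    (commute_pow_prime_pow hH hc x).zpow_right i
  exact (hcent i _).symm.mul_left ((hcent j x).mul_right (setLike_mul_comm hx hy))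

theorem eq_one_of_commute_of_notMem_center [IsCyclic K] (hodd : Odd p) (hH : IsPGroup p H)
    (hc : orderOf c = p ^ (n + 1)) (hK : IsCompl (zpowers c) K) {e : H} (he : e ^ p = 1)
    (hecent : e ∉ center H) (hy : y ∈ K) (hyc : Commute y c) : y = 1 := by
  obtain ⟨a, y₀, hy₀, hy₀p, rfl⟩ := exists_zpow_mul_eq_of_pow_eq_one hodd hH hc hK he
  obtain ⟨t, ht⟩ := IsPGroup.iff_orderOf.mp hH y
  rcases t.eq_zero_or_pos with rfl | htpos
  · simpa using ht
  -- Otherwise the `K`-component of `e` is a power of `y`, so `e` commutes with `c` and with `K`.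
  refine absurd (mem_center_iff.mpr fun x => ?_) hecent
  have hord : orderOf (y ^ (orderOf y / p)) = p :=
    orderOf_pow_orderOf_div (by simp [ht, (Fact.out : p.Prime).ne_zero])
      (ht ▸ dvd_pow_self p htpos.ne')
  obtain ⟨l, rfl⟩ := mem_zpowers_of_pow_prime_eq_one (pow_mem hy _) hy₀ hord hy₀p
  obtain ⟨i, w, hw, rfl⟩ := exists_zpow_mul_eq_of_isCompl hK x
  have hcy₀ : Commute (c ^ i) ((y ^ (orderOf y / p)) ^ l) :=
    ((hyc.pow_left _).zpow_left l).symm.zpow_left i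
  exact ((commute_pow_prime_pow hH hc _).zpow_right a).mul_right
    (hcy₀.mul_left (setLike_mul_comm hw hy₀))

theorem zpow_mul_pow_prime_pow (hodd : Odd p) (hH : IsPGroup p H) (hc : orderOf c = p ^ (n + 1))
    (hfaith : ∀ y ∈ K, Commute y c → y = 1) (hy : y ∈ K) (i : ℤ) :
    (c ^ i * y) ^ p ^ n = c ^ (i * (p : ℤ) ^ n) := by
  obtain ⟨R, hR, hyR⟩ := exists_conj_eq_zpow hH (hc ▸ dvd_pow_self p n.succ_ne_zero) y
  have hypow : y ^ p ^ n = 1 := by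
    refine hfaith _ (pow_mem hy _) (mul_inv_eq_iff_eq_mul.mp ?_)
    rw [pow_conj_eq_zpow_pow hyR]
    nth_rw 2 [← zpow_one c]
    rw [← orderOf_dvd_sub_iff_zpow_eq_zpow, hc]
    simpa using dvd_sub_pow_of_dvd_sub hR n
  rw [zpow_mul_pow_eq hyR, hypow, mul_one, ← orderOf_dvd_sub_iff_zpow_eq_zpow, hc, ← mul_sub]
  exact_mod_cast (pow_succ_dvd_geom_sum_sub hodd hR n).mul_left i

theorem exists_commutator_zpow_eq_zpow (hodd : Odd p) (hH : IsPGroup p H)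
    (hc : orderOf c = p ^ (n + 1)) (hK : Disjoint (zpowers c) K) (hy : y ∈ K) (hyp : y ^ p = 1) :
    ∃ l : ℤ, ∀ i : ℤ, ⁅c ^ i, y⁆ = c ^ (i * (p : ℤ) ^ n * l) := by
  obtain ⟨R, -, hyR⟩ := exists_conj_eq_zpow hH (hc ▸ dvd_pow_self p n.succ_ne_zero) y
  have hcomm (i : ℤ) : ⁅c ^ i, y⁆ = c ^ (i * (1 - R)) := by
    calc ⁅c ^ i, y⁆ = c ^ i * (y * c * y⁻¹) ^ (-i) := by
          rw [conj_zpow, commutatorElement_def]; group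
      _ = c ^ (i * (1 - R)) := by rw [hyR, ← zpow_mul, ← zpow_add]; ring_nf
  have hpow : (c ^ (1 - R) * y) ^ p = 1 := by
    have hconj : c ^ (1 - R) * y = c * y * c⁻¹ := by
      rw [← one_mul (1 - R), ← hcomm, commutatorElement_def]; group
    rw [hconj, conj_pow, hyp]; group
  obtain ⟨l, hl⟩ := (pow_dvd_of_zpow_mul_pow_eq_one hodd hH hc hK hy hpow).2
  exact ⟨l, fun i => by rw [hcomm, hl, mul_assoc]⟩

theorem exists_commutator_eq_zpow_of_isCompl [IsCyclic K] (hodd : Odd p) (hH : IsPGroup p H)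
    (hc : orderOf c = p ^ (n + 1)) (hK : IsCompl (zpowers c) K) {e : H} (he : e ^ p = 1) :
    ∃ m : ℤ, ∀ x : H, ⁅x, e⁆ = x ^ m := by
  by_cases hecent : e ∈ center H
  · exact ⟨0, fun x => by
      rw [zpow_zero, commutatorElement_eq_one_iff_commute]
      exact mem_center_iff.mp hecent x⟩
  have hfaith : ∀ y ∈ K, Commute y c → y = 1 := fun y hy =>
    eq_one_of_commute_of_notMem_center hodd hH hc hK he hecent hy
  obtain ⟨a, y, hy, hyp, rfl⟩ := exists_zpow_mul_eq_of_pow_eq_one hodd hH hc hK he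
  obtain ⟨l, hl⟩ := exists_commutator_zpow_eq_zpow hodd hH hc hK.disjoint hy hyp
  refine ⟨p ^ n * l, fun x => ?_⟩
  obtain ⟨i, w, hw, rfl⟩ := exists_zpow_mul_eq_of_isCompl hK x
  have hz (x : H) : Commute x ((c ^ p ^ n) ^ a) := (commute_pow_prime_pow hH hc x).zpow_right a
  have hwy : ⁅w, y⁆ = 1 := Commute.commutator_eq (setLike_mul_comm hw hy)
  calc ⁅c ^ i * w, (c ^ p ^ n) ^ a * y⁆
      = (c ^ p ^ n) ^ a * ⁅c ^ i * w, y⁆ * ((c ^ p ^ n) ^ a)⁻¹ := by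
        rw [commutatorElement_mul_right_eq_mul_conj,
          (hz _).commutator_eq, one_mul]
    _ = ⁅c ^ i * w, y⁆ := (hz _).symm.mul_inv_cancel
    _ = ⁅c ^ i, y⁆ := by
        rw [commutatorElement_mul_left_eq_conj_mul, hwy, mul_one, mul_inv_cancel, one_mul]
    _ = ((c ^ i * w) ^ p ^ n) ^ l := by
        rw [hl, zpow_mul, zpow_mul_pow_prime_pow hodd hH hc hfaith hw i]
    _ = (c ^ i * w) ^ ((p : ℤ) ^ n * l) := by rw [zpow_mul]; norm_cast

theorem isCyclic_center_of_isCompl [IsCyclic K] (hodd : Odd p) (hH : IsPGroup p H)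
    (hc : orderOf c = p ^ (n + 1)) (hK : IsCompl (zpowers c) K) {e : H} (he : e ^ p = 1)
    (hecent : e ∉ center H) : IsCyclic (center H) := by
  suffices center H ≤ zpowers c from isCyclic_of_le this
  intro x hx
  obtain ⟨i, y, hy, rfl⟩ := exists_zpow_mul_eq_of_isCompl hK x
  have hyc : Commute y c := by
    have h := ((Commute.refl c).zpow_right i).inv_right.mul_right (mem_center_iff.mp hx c)
    rw [inv_mul_cancel_left] at h
    exact h.symm
  rw [eq_one_of_commute_of_notMem_center hodd hH hc hK he hecent hy hyc, mul_one]
  exact zpow_mem_zpowers c i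

end CyclicNormal

section SplitMetacyclic

variable {H : Type*} [Group H] {p : ℕ} [Fact p.Prime]

theorem IsSplitMetacyclic.isMulCommutative_or_exists (hs : IsSplitMetacyclic H)
    (hH : IsPGroup p H) :
    IsMulCommutative H ∨ ∃ (c : H) (n : ℕ) (K : Subgroup H), (zpowers c).Normal ∧
      orderOf c = p ^ (n + 1) ∧ IsCyclic K ∧ IsCompl (zpowers c) K := by
  obtain ⟨C, K, hC, hCcyc, hK, hinf, hsup⟩ := hs
  obtain ⟨c, rfl⟩ := C.isCyclic_iff_exists_zpowers_eq_top.mp hCcyc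
  obtain ⟨m, hm⟩ := IsPGroup.iff_orderOf.mp hH c
  cases m with
  | zero =>
    obtain rfl : c = 1 := by simpa using hm
    obtain rfl : K = ⊤ := by simpa using hsup
    exact .inl (.of_comm fun x y => setLike_mul_comm (mem_top x) (mem_top y))
  | succ n =>
    exact .inr ⟨c, n, K, hC, hm, hK, disjoint_iff.mpr hinf, codisjoint_iff.mpr hsup⟩

theorem IsSplitMetacyclic.commute_of_pow_eq_one (hs : IsSplitMetacyclic H) (hodd : Odd p)
    (hH : IsPGroup p H) {a b : H} (ha : a ^ p = 1) (hb : b ^ p = 1) : Commute a b := by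
  obtain _ | ⟨c, n, K, _, hc, _, hK⟩ := hs.isMulCommutative_or_exists hH
  · exact mul_comm' a b
  · exact commute_of_pow_eq_one_of_isCompl hodd hH hc hK ha hb

theorem IsSplitMetacyclic.exists_commutator_eq_zpow (hs : IsSplitMetacyclic H) (hodd : Odd p)
    (hH : IsPGroup p H) {e : H} (he : e ^ p = 1) : ∃ m : ℤ, ∀ x : H, ⁅x, e⁆ = x ^ m := by
  obtain _ | ⟨c, n, K, _, hc, _, hK⟩ := hs.isMulCommutative_or_exists hH
  · exact ⟨0, fun x => by rw [zpow_zero, Commute.commutator_eq (mul_comm' x e)]⟩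
  · exact exists_commutator_eq_zpow_of_isCompl hodd hH hc hK he

theorem IsSplitMetacyclic.isCyclic_center (hs : IsSplitMetacyclic H) (hodd : Odd p)
    (hH : IsPGroup p H) {e : H} (he : e ^ p = 1) (hecent : e ∉ center H) :
    IsCyclic (center H) := by
  obtain _ | ⟨c, n, K, _, hc, _, hK⟩ := hs.isMulCommutative_or_exists hH
  · exact absurd (mem_center_iff.mpr fun x => mul_comm' x e) hecent
  · exact isCyclic_center_of_isCompl hodd hH hc hK he hecent

end SplitMetacyclic

section WeaklyClosed

variable {G : Type*} [Group G]

/-- `W` is weakly closed in `S` (with respect to `G`): no conjugate of `W` other than `W` itself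
is contained in `S`. This is phrased elementwise: every `g` conjugating `W` into `S` normalizes
`W`. -/
def IsWeaklyClosed (W S : Subgroup G) : Prop :=
  ∀ g : G, (∀ x ∈ W, g * x * g⁻¹ ∈ S) → g ∈ normalizer (W : Set G)

variable {W S : Subgroup G} {p : ℕ}

theorem IsWeaklyClosed.normalizer_le (hW : IsWeaklyClosed W S) (hWS : W ≤ S) :
    normalizer (S : Set G) ≤ normalizer (W : Set G) :=
  fun g hg => hW g fun x hx => (mem_normalizer_iff.mp hg x).mp (hWS hx)

theorem isWeaklyClosed_self [Finite S] : IsWeaklyClosed S S :=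
  fun _ hg => mem_normalizer_fintype hg

theorem isWeaklyClosed_omega1 [Finite (omega1 p S)] (h : ∀ x ∈ omega1 p S, x ^ p = 1) :
    IsWeaklyClosed (omega1 p S) S := fun g hg => mem_normalizer_fintype fun x hx =>
  mem_omega1_of_pow_eq_one (hg x hx) (by rw [conj_pow, h x hx, mul_one, mul_inv_cancel])

variable [Finite G] [Fact p.Prime]

theorem exists_conj_mem_sylow (T : Sylow p G) {R : Subgroup G} (hR : IsPGroup p R) :
    ∃ g : G, ∀ x ∈ R, g * x * g⁻¹ ∈ T := by
  obtain ⟨R', hRR'⟩ := hR.exists_le_sylow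
  obtain ⟨g, rfl⟩ := MulAction.exists_smul_eq G R' T
  exact ⟨g, fun x hx => smul_mem_pointwise_smul _ (MulAut.conj g) R'.toSubgroup (hRR' hx)⟩

/-- The Frattini argument, with conjugation into a Sylow subgroup of `L` containing `W` and weak
closure of `W` in place of the Sylow theorem. -/
theorem IsWeaklyClosed.exists_mul_mem_normalizer {S : Sylow p G} {W L : Subgroup G}
    (hW : IsWeaklyClosed W S) (hWS : W ≤ S) (hWL : W ≤ L) {g : G}
    (hg : g ∈ normalizer (L : Set G)) : ∃ m ∈ L, m * g ∈ normalizer (W : Set G) := by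
  have hWp : IsPGroup p W := S.isPGroup'.to_le hWS
  obtain ⟨T, hWT⟩ := (hWp.comap_subtype (K := L)).exists_le_sylow
  have hgW : ∀ x ∈ W, g * x * g⁻¹ ∈ L := fun x hx => (mem_normalizer_iff.mp hg x).mp (hWL hx)
  obtain ⟨m, hm⟩ := exists_conj_mem_sylow T
    ((hWp.map (MulAut.conj g).toMonoidHom).comap_subtype (K := L))
  obtain ⟨h, hh⟩ := exists_conj_mem_sylow S (T.isPGroup'.map L.subtype)
  have hhW : h ∈ normalizer (W : Set G) :=
    hW h fun x hx => hh x ⟨⟨x, hWL hx⟩, hWT (mem_subgroupOf.mpr hx), rfl⟩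
  have hhmgW : h * (m * g) ∈ normalizer (W : Set G) := hW _ fun x hx => by
    have hmT := hm ⟨g * x * g⁻¹, hgW x hx⟩ (mem_subgroupOf.mpr ⟨x, hx, rfl⟩)
    suffices h * (m * g) * x * (h * (m * g))⁻¹ ∈ S from this
    simpa [mul_assoc] using hh _ ⟨_, hmT, rfl⟩
  exact ⟨m, m.2, (mul_mem_cancel_left hhW).mp hhmgW⟩

theorem normalizer_le_self_of_normalizer_sylow_le {S : Sylow p G} {L : Subgroup G}
    (h : normalizer (S : Set G) ≤ L) : normalizer (L : Set G) ≤ L := by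
  intro g hg
  obtain ⟨m, hm, hmg⟩ := (isWeaklyClosed_self (S := (S : Subgroup G))).exists_mul_mem_normalizer
    le_rfl (S.le_normalizer.trans h) hg
  exact (mul_mem_cancel_left hm).mp (h hmg)

end WeaklyClosed

section SectionCentralizer

variable {G : Type*} [Group G]

theorem normalizer_le_normalizer_centralizer (S : Subgroup G) :
    normalizer (S : Set G) ≤ normalizer (centralizer (S : Set G) : Set G) :=
  (normal_subgroupOf_iff_le_normalizer (centralizer_le_normalizer _)).mp inferInstance

/-- The centralizer of `E` modulo `Z`: the elements of the normalizer of `Z` whose commutators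
with the elements of `E` lie in `Z`. If `Z` is normal in `E`, these are the elements that
normalize both `E` and `Z` and act trivially on the section `E / Z`. -/
def sectionCentralizer (E Z : Subgroup G) : Subgroup G where
  carrier := {x | x ∈ normalizer (Z : Set G) ∧ ∀ e ∈ E, ⁅x, e⁆ ∈ Z}
  one_mem' := ⟨one_mem _, fun e _ => by rw [commutatorElement_one_left]; exact one_mem Z⟩
  mul_mem' := fun {x y} hx hy => ⟨mul_mem hx.1 hy.1, fun e he => by
    rw [commutatorElement_mul_left_eq_conj_mul]
    exact mul_mem ((mem_normalizer_iff.mp hx.1 _).mp (hy.2 e he)) (hx.2 e he)⟩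
  inv_mem' := fun {x} hx => ⟨inv_mem hx.1, fun e he => by
    rw [commutatorElement_inv_left, ← commutatorElement_inv]
    exact (mem_normalizer_iff''.mp hx.1 _).mp (inv_mem (hx.2 e he))⟩

variable {E Z S : Subgroup G}

theorem normalizer_inf_normalizer_le_normalizer_sectionCentralizer :
    normalizer (E : Set G) ⊓ normalizer (Z : Set G) ≤
      normalizer (sectionCentralizer E Z : Set G) := by
  refine le_normalizer_iff.mpr fun g hg x hx => ⟨mul_mem (mul_mem hg.2 hx.1) (inv_mem hg.2),
    fun e he => ?_⟩
  have hconj := (mem_normalizer_iff.mp hg.2 _).mp (hx.2 _ ((mem_normalizer_iff''.mp hg.1 e).mp he))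
  rw [conjugate_commutatorElement] at hconj
  simpa [mul_assoc] using hconj

theorem normalizer_inf_normalizer_le_sectionCentralizer [Finite G] {p : ℕ} [Fact p.Prime]
    {S : Sylow p G} (hS : normalizer (S : Set G) ≤ sectionCentralizer E Z) :
    normalizer (E : Set G) ⊓ normalizer (Z : Set G) ≤ sectionCentralizer E Z :=
  normalizer_inf_normalizer_le_normalizer_sectionCentralizer.trans
    (normalizer_le_self_of_normalizer_sylow_le hS)

theorem commutatorElement_conj_eq_of_forall_commutator_eq_zpow {e : G} {m : ℤ}
    (hm : ∀ x ∈ S, ⁅x, e⁆ = x ^ m) {g x : G} (hg : g ∈ normalizer (S : Set G)) (hx : x ∈ S) :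
    ⁅x, g * e * g⁻¹⁆ = ⁅x, e⁆ := by
  calc ⁅x, g * e * g⁻¹⁆ = g * ⁅g⁻¹ * x * g, e⁆ * g⁻¹ := by
        rw [conjugate_commutatorElement]; congr 1; group
    _ = ⁅x, e⁆ := by
        rw [hm _ ((mem_normalizer_iff''.mp hg x).mp hx), ← conj_zpow, hm x hx]; congr 1; group

theorem normalizer_le_sectionCentralizer [IsMulCommutative E]
    (hSE : normalizer (S : Set G) ≤ normalizer (E : Set G))
    (hpow : ∀ e ∈ E, ∃ m : ℤ, ∀ x ∈ S, ⁅x, e⁆ = x ^ m) :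
    normalizer (S : Set G) ≤ sectionCentralizer E (E ⊓ centralizer S) := by
  have hcommE {g e : G} (hg : g ∈ normalizer (E : Set G)) (he : e ∈ E) : ⁅g, e⁆ ∈ E :=
    mul_mem ((mem_normalizer_iff.mp hg e).mp he) (inv_mem he)
  refine fun g hg => ⟨?_, fun e he => ⟨hcommE (hSE hg) he, ?_⟩⟩
  · exact inf_normalizer_le_normalizer_inf
      ⟨hSE hg, normalizer_le_normalizer_centralizer S hg⟩
  refine mem_centralizer_iff.mpr fun x hx => mul_inv_eq_iff_eq_mul.mp ?_
  obtain ⟨m, hm⟩ := hpow e he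
  calc x * ⁅g, e⁆ * x⁻¹ = ⁅x, g * e * g⁻¹⁆ * ⁅g, e⁆ * ⁅x, e⁆⁻¹ := by
        simp only [commutatorElement_def]; group
    _ = ⁅x, e⁆ * ⁅g, e⁆ * ⁅x, e⁆⁻¹ := by
        rw [commutatorElement_conj_eq_of_forall_commutator_eq_zpow hm hg hx]
    _ = ⁅g, e⁆ := mul_inv_eq_of_eq_mul
        (setLike_mul_comm (hcommE (hSE (le_normalizer hx)) he) (hcommE (hSE hg) he))

end SectionCentralizer

section Transvections

variable {G : Type*} [Group G] {E S Z : Subgroup G} {p : ℕ} [hp : Fact p.Prime]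

theorem commutatorElement_pow_left {x e : G} (h : Commute x ⁅x, e⁆) (j : ℕ) :
    ⁅x ^ j, e⁆ = ⁅x, e⁆ ^ j := by
  induction j with
  | zero => simp
  | succ j ih =>
    rw [pow_succ', commutatorElement_mul_left_eq_conj_mul, ih, (h.pow_right j).mul_inv_cancel,
      pow_succ]

theorem exists_pow_eq_of_card_eq_prime (hZ : Nat.card Z = p) {a b : G} (ha : a ∈ Z) (ha1 : a ≠ 1)
    (hb : b ∈ Z) : ∃ j : ℕ, a ^ j = b := by
  obtain ⟨j, hj⟩ := mem_powers_of_prime_card (g := ⟨a, ha⟩) (g' := ⟨b, hb⟩) hZ (by simpa using ha1)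
  exact ⟨j, congrArg Subtype.val hj⟩

theorem disjoint_of_card_eq_prime {Q : Subgroup G} (hQ : Nat.card Q = p) (hQZ : ¬Q ≤ Z) :
    Disjoint Q Z := by
  refine disjoint_def.mpr fun {x} hxQ hxZ => by_contra fun hx1 => hQZ fun q hq => ?_
  obtain ⟨j, rfl⟩ := exists_pow_eq_of_card_eq_prime hQ hxQ hx1 hq
  exact pow_mem hxZ j

theorem exists_commutator_eq_of_card_eq_prime (hZ : Nat.card (E ⊓ centralizer (S : Set G) :) = p)
    {e : G} (hecent : e ∉ centralizer (S : Set G))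
    (hcomm : ∀ x ∈ S, ⁅x, e⁆ ∈ E ⊓ centralizer (S : Set G)) {t : G}
    (ht : t ∈ E ⊓ centralizer (S : Set G)) : ∃ s ∈ S, ⁅s, e⁆ = t := by
  obtain ⟨x, hx, hxe⟩ : ∃ x ∈ S, ⁅x, e⁆ ≠ 1 := by
    contrapose! hecent
    exact mem_centralizer_iff_commutator_eq_one.mpr hecent
  obtain ⟨j, rfl⟩ := exists_pow_eq_of_card_eq_prime hZ (hcomm x hx) hxe ht
  exact ⟨x ^ j, pow_mem hx j,
    commutatorElement_pow_left (mem_centralizer_iff.mp (hcomm x hx).2 x hx) j⟩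

/-- On `⟨z, z'⟩` the automorphisms `f` and `g` act as the elementary transvections of `SL₂`, and the
corresponding Weyl element `f * g * f` squares to `-1`. -/
theorem weyl_sq_apply {f g : MulAut G} {z z' : G} (hcomm : Commute z z') (hfz : f z = z)
    (hfz' : f z' = z * z') (hgz : g z = z'⁻¹ * z) (hgz' : g z' = z') :
    ((f * g * f) ^ 2) z = z⁻¹ ∧ ((f * g * f) ^ 2) z' = z'⁻¹ := by
  have hz : (f * g * f) z = z'⁻¹ := by simp [hfz, hfz', hgz]
  have hz' : (f * g * f) z' = z := by
    simp [hfz, hfz', hgz, hgz', mul_assoc, hcomm.symm.inv_mul_cancel_assoc]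
  exact ⟨by rw [sq, MulAut.mul_apply, hz, map_inv, hz'], by rw [sq, MulAut.mul_apply, hz', hz]⟩

theorem weyl_sq_conj {g s u z : G} (hcomm : Commute z (g * z * g⁻¹)) (hsz : Commute s z)
    (huz : Commute u z) (hs : ⁅s, g * z * g⁻¹⁆ = z) (hu : ⁅u, g⁻¹ * z * g⁻¹⁻¹⁆ = z⁻¹) :
    MulAut.conj ((s * (g * u * g⁻¹) * s) ^ 2) z = z⁻¹ ∧
      MulAut.conj ((s * (g * u * g⁻¹) * s) ^ 2) (g * z * g⁻¹) = (g * z * g⁻¹)⁻¹ := by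
  simp only [map_pow, map_mul MulAut.conj s, map_mul MulAut.conj _ s]
  refine weyl_sq_apply hcomm hsz.mul_inv_cancel (mul_inv_eq_iff_eq_mul.mp hs) ?_ ?_
  · calc g * u * g⁻¹ * z * (g * u * g⁻¹)⁻¹
        = g * (⁅u, g⁻¹ * z * g⁻¹⁻¹⁆ * (g⁻¹ * z * g)) * g⁻¹ := by
          simp only [commutatorElement_def]; group
      _ = (g * z * g⁻¹)⁻¹ * z := by rw [hu]; group
  · calc g * u * g⁻¹ * (g * z * g⁻¹) * (g * u * g⁻¹)⁻¹ = g * (u * z * u⁻¹) * g⁻¹ := by group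
      _ = g * z * g⁻¹ := by rw [huz.mul_inv_cancel]

theorem mem_normalizer_of_card_eq_prime (hZ : Nat.card Z = p) {g z : G} (hz : z ∈ Z) (hz1 : z ≠ 1)
    (hg : g * z * g⁻¹ ∈ Z) : g ∈ normalizer (Z : Set G) := by
  have : Finite Z := Nat.finite_of_card_ne_zero (by rw [hZ]; exact hp.out.ne_zero)
  refine mem_normalizer_fintype fun x hx => ?_
  obtain ⟨j, rfl⟩ := exists_pow_eq_of_card_eq_prime hZ hz hz1 hx
  simpa using pow_mem hg j

theorem exists_conj_eq_inv_of_notMem_normalizer [IsMulCommutative E]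
    (hSE : S ≤ normalizer (E : Set G)) (hZ : Nat.card (E ⊓ centralizer (S : Set G) :) = p)
    (hcomm : ∀ x ∈ S, ∀ e ∈ E, ⁅x, e⁆ ∈ E ⊓ centralizer (S : Set G)) {g : G}
    (hg : g ∈ normalizer (E : Set G))
    (hgZ : g ∉ normalizer ((E ⊓ centralizer S : Subgroup G) : Set G)) :
    ∃ w ∈ normalizer (E : Set G), ∃ z ∈ E ⊓ centralizer (S : Set G), z ≠ 1 ∧
      w * z * w⁻¹ = z⁻¹ ∧ ∃ z' ∈ E, z' ∉ centralizer (S : Set G) ∧ w * z' * w⁻¹ = z'⁻¹ := by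
  obtain ⟨z, hz, hz1⟩ := ((E ⊓ centralizer (S : Set G)).bot_or_exists_ne_one).resolve_left
    fun h => hp.out.ne_one (hZ ▸ card_eq_one.mpr h)
  have hSz (x : G) (hx : x ∈ S) : Commute x z := mem_centralizer_iff.mp hz.2 x hx
  have hmove {h : G} (hh : h ∈ normalizer (E : Set G))
      (hhZ : h ∉ normalizer ((E ⊓ centralizer S : Subgroup G) : Set G)) :
      h * z * h⁻¹ ∈ E ∧ h * z * h⁻¹ ∉ centralizer (S : Set G) :=
    have hmem := (mem_normalizer_iff.mp hh z).mp hz.1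
    ⟨hmem, fun h' => hhZ (mem_normalizer_of_card_eq_prime hZ hz hz1 ⟨hmem, h'⟩)⟩
  have hsurj {e t : G} (he : e ∈ E ∧ e ∉ centralizer (S : Set G))
      (ht : t ∈ E ⊓ centralizer (S : Set G)) : ∃ s ∈ S, ⁅s, e⁆ = t :=
    exists_commutator_eq_of_card_eq_prime hZ he.2 (fun x hx => hcomm x hx e he.1) ht
  have hz' := hmove hg hgZ
  obtain ⟨s, hs, hsz'⟩ := hsurj hz' hz
  obtain ⟨u, hu, huz⟩ := hsurj (hmove (inv_mem hg) (mt inv_mem_iff.mp hgZ)) (inv_mem hz)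
  obtain ⟨hwz, hwz'⟩ :=
    weyl_sq_conj (setLike_mul_comm hz.1 hz'.1) (hSz s hs) (hSz u hu) hsz' huz
  have hw : s * (g * u * g⁻¹) * s ∈ normalizer (E : Set G) :=
    mul_mem (mul_mem (hSE hs) (mul_mem (mul_mem hg (hSE hu)) (inv_mem hg))) (hSE hs)
  exact ⟨_, pow_mem hw 2, z, hz, hz1, hwz, _, hz'.1, hz'.2, hwz'⟩

theorem normalizer_le_normalizer_inf_centralizer [Finite G] [IsMulCommutative E] (hodd : Odd p)
    {S : Sylow p G} (hSE : normalizer (S : Set G) ≤ normalizer (E : Set G))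
    (hEp : ∀ e ∈ E, e ^ p = 1)
    (hS : normalizer (S : Set G) ≤ sectionCentralizer E (E ⊓ centralizer S))
    (hZ : Nat.card (E ⊓ centralizer (S : Set G) :) = p) :
    normalizer (E : Set G) ≤ normalizer ((E ⊓ centralizer S : Subgroup G) : Set G) := by
  by_contra hle
  obtain ⟨g, hg, hgZ⟩ := SetLike.not_le_iff_exists.mp hle
  obtain ⟨w, hw, z, hz, hz1, hwz, z', hz'E, hz'S, hwz'⟩ := exists_conj_eq_inv_of_notMem_normalizer
    (S.le_normalizer.trans hSE) hZ (fun x hx => (hS (le_normalizer hx)).2) hg hgZ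
  have hwZ : w ∈ normalizer ((E ⊓ centralizer S : Subgroup G) : Set G) :=
    mem_normalizer_of_card_eq_prime hZ hz hz1 (hwz ▸ inv_mem hz)
  have hcomm : ⁅w, z'⁆ ∈ E ⊓ centralizer (S : Set G) :=
    (normalizer_inf_normalizer_le_sectionCentralizer hS ⟨hw, hwZ⟩).2 z' hz'E
  refine hz'S ?_
  obtain ⟨k, rfl⟩ := hodd
  have hpow : ⁅w, z'⁆⁻¹ ^ (k + 1) = z' := by
    calc ⁅w, z'⁆⁻¹ ^ (k + 1) = z' ^ (2 * k + 1) * z' := by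
          rw [commutatorElement_def, hwz', ← mul_inv_rev, inv_inv, ← sq, ← pow_mul]; group
      _ = z' := by rw [hEp z' hz'E, one_mul]
  exact (hpow ▸ pow_mem (inv_mem hcomm) (k + 1)).2

theorem normalizer_eq_centralizer_of_isWeaklyClosed [Finite G] (hodd : Odd p) {S : Sylow p G}
    {E Q : Subgroup G} [IsMulCommutative E] (hES : E ≤ S) (hclosed : IsWeaklyClosed E S)
    (hEp : ∀ e ∈ E, e ^ p = 1) (hpow : ∀ e ∈ E, ∃ m : ℤ, ∀ x ∈ S, ⁅x, e⁆ = x ^ m)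
    (hZ : Nat.card (E ⊓ centralizer (S : Set G) :) = p) (hQE : Q ≤ E) (hQ : Nat.card Q = p)
    (hQZ : ¬Q ≤ centralizer (S : Set G)) :
    normalizer (Q : Set G) = centralizer (Q : Set G) := by
  have hSE := hclosed.normalizer_le hES
  have hS := normalizer_le_sectionCentralizer hSE hpow
  have hEZ : normalizer (E : Set G) ≤ sectionCentralizer E (E ⊓ centralizer S) :=
    (le_inf le_rfl (normalizer_le_normalizer_inf_centralizer hodd hSE hEp hS hZ)).trans
      (normalizer_inf_normalizer_le_sectionCentralizer hS)
  have hQZ : Disjoint Q (E ⊓ centralizer (S : Set G)) :=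
    disjoint_of_card_eq_prime hQ fun h => hQZ (h.trans inf_le_right)
  have hEQ : E ≤ centralizer (Q : Set G) := fun e he =>
    mem_centralizer_iff.mpr fun q hq => setLike_mul_comm (hQE hq) he
  refine le_antisymm (fun g hg => ?_) (centralizer_le_normalizer _)
  obtain ⟨m, hm, hmg⟩ := hclosed.exists_mul_mem_normalizer hES hEQ
    (normalizer_le_normalizer_centralizer Q hg)
  suffices m * g ∈ centralizer (Q : Set G) from (mul_mem_cancel_left hm).mp this
  refine mem_centralizer_iff_commutator_eq_one'.mpr fun q hq => ?_
  have hmgQ : m * g ∈ normalizer (Q : Set G) := mul_mem (centralizer_le_normalizer _ hm) hg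
  exact disjoint_def.mp hQZ
    (mul_mem ((mem_normalizer_iff.mp hmgQ q).mp hq) (inv_mem hq)) ((hEZ hmg).2 q (hQE hq))

end Transvections

section OmegaOneOfSplitMetacyclic

variable {G : Type*} [Group G] {p : ℕ} [hp : Fact p.Prime]

variable {S : Subgroup G}

theorem IsSplitMetacyclic.commute_of_mem_of_pow_eq_one (hs : IsSplitMetacyclic S) (hodd : Odd p)
    (hS : IsPGroup p S) : ∀ a ∈ S, ∀ b ∈ S, a ^ p = 1 → b ^ p = 1 → Commute a b :=
  fun a ha b hb hap hbp =>
    (hs.commute_of_pow_eq_one hodd hS (a := ⟨a, ha⟩) (b := ⟨b, hb⟩) (Subtype.ext hap)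
      (Subtype.ext hbp)).map S.subtype

theorem IsSplitMetacyclic.isMulCommutative_omega1 (hs : IsSplitMetacyclic S) (hodd : Odd p)
    (hS : IsPGroup p S) : IsMulCommutative (omega1 p S) :=
  isMulCommutative_closure fun a ha b hb =>
    hs.commute_of_mem_of_pow_eq_one hodd hS a ha.1 b hb.1 ha.2 hb.2

theorem IsSplitMetacyclic.pow_eq_one_of_mem_omega1 (hs : IsSplitMetacyclic S) (hodd : Odd p)
    (hS : IsPGroup p S) {x : G} (hx : x ∈ omega1 p S) : x ^ p = 1 :=
  pow_eq_one_of_mem_omega1_of_commute (hs.commute_of_mem_of_pow_eq_one hodd hS) hx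

theorem IsSplitMetacyclic.exists_commutator_eq_zpow_of_mem_omega1 (hs : IsSplitMetacyclic S)
    (hodd : Odd p) (hS : IsPGroup p S) {e : G} (he : e ∈ omega1 p S) :
    ∃ m : ℤ, ∀ x ∈ S, ⁅x, e⁆ = x ^ m := by
  obtain ⟨m, hm⟩ := hs.exists_commutator_eq_zpow hodd hS (e := ⟨e, omega1_le he⟩)
    (Subtype.ext (hs.pow_eq_one_of_mem_omega1 hodd hS he))
  exact ⟨m, fun x hx => congrArg Subtype.val (hm ⟨x, hx⟩)⟩

theorem mem_center_iff_coe_mem_centralizer {x : S} :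
    x ∈ center S ↔ (x : G) ∈ centralizer (S : Set G) := by
  simp [mem_center_iff, mem_centralizer_iff, Subtype.ext_iff]

theorem exists_mem_center_orderOf_eq_prime [Finite G] [Nontrivial G] (hG : IsPGroup p G) :
    ∃ z ∈ center G, orderOf z = p := by
  have := hG.center_nontrivial
  obtain ⟨x, hx, hx1⟩ := (nontrivial_iff_exists_ne_one _).mp this
  exact ⟨x ^ (orderOf x / p), pow_mem hx _,
    orderOf_pow_orderOf_div (orderOf_pos x).ne' (hG.dvd_orderOf hx1)⟩

theorem nontrivial_omega1_inf_centralizer [Finite S] [Nontrivial S] (hS : IsPGroup p S) :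
    Nontrivial (omega1 p S ⊓ centralizer (S : Set G) :) := by
  obtain ⟨z, hz, hzp⟩ := exists_mem_center_orderOf_eq_prime hS
  rw [← orderOf_coe] at hzp
  refine (nontrivial_iff_exists_ne_one _).mpr ⟨z, ⟨mem_omega1_of_pow_eq_one z.2 ?_,
    mem_center_iff_coe_mem_centralizer.mp hz⟩, fun hz1 => hp.out.ne_one ?_⟩
  · rw [← hzp, pow_orderOf_eq_one]
  · rw [← hzp, hz1, orderOf_one]

theorem IsSplitMetacyclic.isCyclic_omega1_inf_centralizer (hs : IsSplitMetacyclic S)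
    (hodd : Odd p) (hS : IsPGroup p S) (h : ¬omega1 p S ≤ centralizer (S : Set G)) :
    IsCyclic (omega1 p S ⊓ centralizer (S : Set G) :) := by
  obtain ⟨e, he, hecent⟩ := SetLike.not_le_iff_exists.mp h
  have : IsCyclic (center S) := hs.isCyclic_center hodd hS (e := ⟨e, omega1_le he⟩)
    (Subtype.ext (hs.pow_eq_one_of_mem_omega1 hodd hS he))
    (mt mem_center_iff_coe_mem_centralizer.mp hecent)
  have : IsCyclic ((center S).map S.subtype) :=
    isCyclic_of_surjective _ (S.subtype.subgroupMap_surjective (center S))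
  have hle : omega1 p S ⊓ centralizer (S : Set G) ≤ (center S).map S.subtype := fun x hx =>
    ⟨⟨x, omega1_le hx.1⟩, mem_center_iff_coe_mem_centralizer.mpr hx.2, rfl⟩
  exact isCyclic_of_le hle

theorem IsSplitMetacyclic.card_omega1_inf_centralizer [Finite S] (hs : IsSplitMetacyclic S)
    (hodd : Odd p) (hS : IsPGroup p S) (h : ¬omega1 p S ≤ centralizer (S : Set G)) :
    Nat.card (omega1 p S ⊓ centralizer (S : Set G) :) = p := by
  have : Nontrivial S := S.nontrivial_iff_ne_bot.mpr fun hbot =>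
    h (omega1_le.trans (hbot.trans_le bot_le))
  have := nontrivial_omega1_inf_centralizer hS
  have := hs.isCyclic_omega1_inf_centralizer hodd hS h
  exact card_eq_prime_of_forall_pow_eq_one fun x =>
    Subtype.ext (hs.pow_eq_one_of_mem_omega1 hodd hS x.2.1)

end OmegaOneOfSplitMetacyclic

theorem stmt16 (p : ℕ) [Fact p.Prime] (hodd : Odd p) {G : Type*} [Group G] [Fintype G]
    (S : Sylow p G) (hsplit : IsSplitMetacyclic (S : Subgroup G))
    (hE : ¬omega1 p (S : Subgroup G) ≤
      (S : Subgroup G) ⊓ Subgroup.centralizer ((S : Subgroup G) : Set G))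
    (Q : Subgroup G) (hQE : Q ≤ omega1 p (S : Subgroup G)) (hQcard : Nat.card Q = p)
    (hQZ : ¬Q ≤ (S : Subgroup G) ⊓ Subgroup.centralizer ((S : Subgroup G) : Set G)) :
    Subgroup.normalizer (Q : Set G) = Subgroup.centralizer (Q : Set G) := by
  have hS : IsPGroup p S := S.isPGroup'
  have := hsplit.isMulCommutative_omega1 hodd hS
  have hΩ : ∀ x ∈ omega1 p (S : Subgroup G), x ^ p = 1 :=
    fun x hx => hsplit.pow_eq_one_of_mem_omega1 hodd hS hx
  have hZ := hsplit.card_omega1_inf_centralizer hodd hS fun h => hE (le_inf omega1_le h)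
  exact normalizer_eq_centralizer_of_isWeaklyClosed hodd omega1_le (isWeaklyClosed_omega1 hΩ) hΩ
    (fun e he => hsplit.exists_commutator_eq_zpow_of_mem_omega1 hodd hS he) hZ hQE hQcard
    fun h => hQZ (le_inf (hQE.trans omega1_le) h)
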